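/- Let X be a Banach space, U an evolution operator on X, P a family of projectors compatible with U with complementary family Q and associated map V, and h, k growth rates. If (U,P) is (h,k)-dichotomic with nondecreasing function N, then the family of norms ‖x‖_t = sup_{τ ≥ t} (h(t)/h(τ))‖U(τ,t)P(t)x‖ + sup_{0 ≤ τ ≤ t} (k(τ)/k(t))‖V(t,τ)Q(t)x‖ satisfies h(t)‖U(t,s)P(s)x‖_t ≤ N(s)h(s)‖P(s)x‖_s and k(t)‖V(t,s)Q(t)x‖_s ≤ N(t)k(s)‖Q(t)x‖_t for all t ≥ s ≥ 0 and x ∈ X. -/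

import Mathlib

open Set Filter Real

variable {X : Type*} [NormedAddCommGroup X] [NormedSpace ℝ X] [CompleteSpace X]

/-- `U : Δ → B(X)` is an evolution operator on `X`. -/
def EvolutionOperator (U : ℝ → ℝ → X →L[ℝ] X) : Prop :=
  (∀ t : ℝ, 0 ≤ t → U t t = ContinuousLinearMap.id ℝ X) ∧
  (∀ t s t₀ : ℝ, 0 ≤ t₀ → t₀ ≤ s → s ≤ t → U t t₀ = (U t s).comp (U s t₀))

/-- `P : ℝ₊ → B(X)` is a family of projectors on `X`. -/
def ProjectorFamily (P : ℝ → X →L[ℝ] X) : Prop :=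
  ∀ t : ℝ, 0 ≤ t → (P t).comp (P t) = P t

/-- `P` is invariant for the evolution operator `U`. -/
def InvariantFor (U : ℝ → ℝ → X →L[ℝ] X) (P : ℝ → X →L[ℝ] X) : Prop :=
  ∀ t s : ℝ, 0 ≤ s → s ≤ t → ∀ x : X, U t s (P s x) = P t (U t s x)

/-- `P` is compatible with `U` : it is invariant for `U` and for every `t ≥ s ≥ 0`
the restriction of `U t s` to `Ker P s` is an isomorphism from `Ker P s` onto
`Ker P t` (a bounded bijection between these closed subspaces of the Banach
space `X`, hence an isomorphism). -/
def CompatibleWith (U : ℝ → ℝ → X →L[ℝ] X) (P : ℝ → X →L[ℝ] X) : Prop :=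
  InvariantFor U P ∧
  ∀ t s : ℝ, 0 ≤ s → s ≤ t →
    Set.BijOn (U t s) {x : X | P s x = 0} {x : X | P t x = 0}

/-- a growth rate : a nondecreasing map `ℝ₊ → [1, ∞)` tending to `∞`. -/
def GrowthRate (h : ℝ → ℝ) : Prop :=
  MonotoneOn h (Ici (0 : ℝ)) ∧ (∀ t : ℝ, 0 ≤ t → 1 ≤ h t) ∧ Tendsto h atTop atTop

/-- a nondecreasing map `ℝ₊ → [1, ∞)`. -/
def Nondecr1 (N : ℝ → ℝ) : Prop :=
  MonotoneOn N (Ici (0 : ℝ)) ∧ ∀ t : ℝ, 0 ≤ t → 1 ≤ N t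

/-- the pair `(U, P)` is (nonuniformly) `(h,k)`-dichotomic; here
`Q t x = x - P t x` is the complementary family of projectors. -/
def Dichotomic (U : ℝ → ℝ → X →L[ℝ] X) (P : ℝ → X →L[ℝ] X) (h k : ℝ → ℝ) : Prop :=
  ∃ N : ℝ → ℝ, Nondecr1 N ∧
    ∀ t s : ℝ, 0 ≤ s → s ≤ t → ∀ x : X,
      h t * ‖U t s (P s x)‖ ≤ N s * (h s * ‖P s x‖) ∧
      k t * ‖x - P s x‖ ≤ N t * (k s * ‖U t s (x - P s x)‖)

/-- the pair `(U, P)` has `(h,k)`-growth. -/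
def HasGrowth (U : ℝ → ℝ → X →L[ℝ] X) (P : ℝ → X →L[ℝ] X) (h k : ℝ → ℝ) : Prop :=
  ∃ M : ℝ → ℝ, Nondecr1 M ∧
    ∀ t s : ℝ, 0 ≤ s → s ≤ t → ∀ x : X,
      h s * ‖U t s (P s x)‖ ≤ M s * (h t * ‖P s x‖) ∧
      k s * ‖x - P s x‖ ≤ M t * (k t * ‖U t s (x - P s x)‖)

/-- `f : X → ℝ` is a norm on `X`. -/
def IsNormOn (f : X → ℝ) : Prop :=
  (∀ x : X, 0 ≤ f x) ∧ (∀ x : X, f x = 0 ↔ x = 0) ∧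
  (∀ (a : ℝ) (x : X), f (a • x) = |a| * f x) ∧
  (∀ x y : X, f (x + y) ≤ f x + f y)

/-- a family of norms `{‖·‖_t : t ≥ 0}` compatible with the family of
projectors `P` (with complementary family `Q t x = x - P t x`). -/
def CompatibleNorms (P : ℝ → X →L[ℝ] X) (nn : ℝ → X → ℝ) : Prop :=
  (∀ t : ℝ, 0 ≤ t → IsNormOn (nn t)) ∧
  ∃ N : ℝ → ℝ, Nondecr1 N ∧
    ∀ t : ℝ, 0 ≤ t → ∀ x : X,
      ‖x‖ ≤ nn t x ∧ nn t x ≤ N t * (‖P t x‖ + ‖x - P t x‖)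

/-- the Lyapunov type family of norms built from the `(h,k)`-growth property:
`‖x‖_t = sup_{τ ≥ t} (h t / h τ)‖U(τ,t)P(t)x‖ + sup_{0 ≤ τ ≤ t} (k τ / k t)‖V(t,τ)Q(t)x‖`. -/
noncomputable def lyapG (U V : ℝ → ℝ → X →L[ℝ] X) (P : ℝ → X →L[ℝ] X)
    (h k : ℝ → ℝ) (t : ℝ) (x : X) : ℝ :=
  (⨆ τ : Ici t, (h t / h (τ : ℝ)) * ‖U (τ : ℝ) t (P t x)‖) +
  (⨆ τ : Icc (0 : ℝ) t, (k (τ : ℝ) / k t) * ‖V t (τ : ℝ) (x - P t x)‖)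

/-- the Lyapunov type family of norms built from the `(h,k)`-dichotomy property:
`|||x|||_t = sup_{τ ≥ t} (h τ / h t)‖U(τ,t)P(t)x‖ + sup_{0 ≤ τ ≤ t} (k t / k τ)‖V(t,τ)Q(t)x‖`. -/
noncomputable def lyapD (U V : ℝ → ℝ → X →L[ℝ] X) (P : ℝ → X →L[ℝ] X)
    (h k : ℝ → ℝ) (t : ℝ) (x : X) : ℝ :=
  (⨆ τ : Ici t, (h (τ : ℝ) / h t) * ‖U (τ : ℝ) t (P t x)‖) +
  (⨆ τ : Icc (0 : ℝ) t, (k t / k (τ : ℝ)) * ‖V t (τ : ℝ) (x - P t x)‖)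

/-! The weights in `lyapG` are at most `1`, with equality at `τ = t`. So when the dichotomy estimate
bounds an orbit, each supremum dominates the original norm of the starting vector, while after
transport it is still bounded by the right-hand side of that estimate; this is why the same `N`
serves. Since `U(t,s)P(s)x` lies in the range of `P(t)` and `V(t,s)Q(t)x` in the kernel of `P(s)`,
only one of the two suprema contributes to each inequality. -/

section WeightedSup

variable {ι : Type*} {w a : ι → ℝ} {M : ℝ}

theorem ciSup_mul_le_of_weight_le_one [Nonempty ι] (hw : ∀ i, w i ≤ 1) (ha : ∀ i, 0 ≤ a i)
    (haM : ∀ i, a i ≤ M) : ⨆ i, w i * a i ≤ M :=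
  ciSup_le fun i => (mul_le_of_le_one_left (ha i) (hw i)).trans (haM i)

theorem le_ciSup_mul_of_weight_eq_one (hw : ∀ i, w i ≤ 1) (ha : ∀ i, 0 ≤ a i)
    (haM : ∀ i, a i ≤ M) {i : ι} (hi : w i = 1) : a i ≤ ⨆ j, w j * a j := by
  have hbdd : BddAbove (range fun j => w j * a j) :=
    ⟨M, forall_mem_range.2 fun j => (mul_le_of_le_one_left (ha j) (hw j)).trans (haM j)⟩
  simpa only [hi, one_mul] using le_ciSup hbdd i

end WeightedSup

section LyapunovNorm

variable {E : Type*} [NormedAddCommGroup E] [NormedSpace ℝ E]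

/-- The forward part `sup_{τ ≥ t} (h t / h τ)‖U(τ,t)x‖` of `lyapG`, with the projection
`P(t)x` replaced by an arbitrary vector. -/
noncomputable def forwardSup (U : ℝ → ℝ → E →L[ℝ] E) (h : ℝ → ℝ) (t : ℝ) (x : E) : ℝ :=
  ⨆ τ : Ici t, (h t / h (τ : ℝ)) * ‖U (τ : ℝ) t x‖

/-- The backward part `sup_{0 ≤ τ ≤ t} (k τ / k t)‖V(t,τ)x‖` of `lyapG`, with the
projection `Q(t)x` replaced by an arbitrary vector. -/
noncomputable def backwardSup (V : ℝ → ℝ → E →L[ℝ] E) (k : ℝ → ℝ) (t : ℝ) (x : E) : ℝ :=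
  ⨆ τ : Icc (0 : ℝ) t, (k (τ : ℝ) / k t) * ‖V t (τ : ℝ) x‖

variable {U V : ℝ → ℝ → E →L[ℝ] E} {P : ℝ → E →L[ℝ] E} {h k : ℝ → ℝ} {s t M N : ℝ} {x : E}

theorem lyapG_of_apply_eq_self (hx : P t x = x) : lyapG U V P h k t x = forwardSup U h t x := by
  simp [lyapG, forwardSup, hx]

theorem lyapG_of_apply_eq_zero (hx : P t x = 0) : lyapG U V P h k t x = backwardSup V k t x := by
  simp [lyapG, backwardSup, hx]

theorem forward_weight_le_one (hmono : MonotoneOn h (Ici t)) (hpos : 0 ≤ h t) (τ : Ici t) :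
    h t / h τ ≤ 1 :=
  have hle : h t ≤ h τ := hmono self_mem_Ici τ.2 τ.2
  div_le_one_of_le₀ hle (hpos.trans hle)

theorem forwardSup_le (hmono : MonotoneOn h (Ici t)) (hpos : 0 ≤ h t)
    (hM : ∀ τ, t ≤ τ → ‖U τ t x‖ ≤ M) : forwardSup U h t x ≤ M :=
  ciSup_mul_le_of_weight_le_one (forward_weight_le_one hmono hpos) (fun _ => norm_nonneg _)
    fun τ => hM τ τ.2

theorem norm_le_forwardSup (hmono : MonotoneOn h (Ici t)) (hpos : 0 < h t)
    (hM : ∀ τ, t ≤ τ → ‖U τ t x‖ ≤ M) (hid : U t t x = x) : ‖x‖ ≤ forwardSup U h t x := by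
  have hself : ‖U t t x‖ ≤ forwardSup U h t x :=
    le_ciSup_mul_of_weight_eq_one (i := (⟨t, self_mem_Ici⟩ : Ici t))
      (forward_weight_le_one hmono hpos.le) (fun τ => norm_nonneg (U τ t x)) (fun τ => hM τ τ.2)
      (div_self hpos.ne')
  rwa [hid] at hself

theorem mul_forwardSup_le (hU : EvolutionOperator U) (hmono : MonotoneOn h (Ici s))
    (hpos : 0 < h s) (hN : 0 ≤ N) (hs : 0 ≤ s) (hst : s ≤ t)
    (hdich : ∀ τ, s ≤ τ → h τ * ‖U τ s x‖ ≤ N * (h s * ‖x‖)) :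
    h t * forwardSup U h t (U t s x) ≤ N * (h s * forwardSup U h s x) := by
  have hbound : ∀ r τ, s ≤ r → r ≤ τ → ‖U τ s x‖ ≤ N * (h s * ‖x‖) / h r := by
    intro r τ hsr hrτ
    rw [le_div_iff₀' (hpos.trans_le (hmono self_mem_Ici hsr hsr))]
    calc h r * ‖U τ s x‖ ≤ h τ * ‖U τ s x‖ := by
          gcongr
          exact hmono hsr (hsr.trans hrτ) hrτ
      _ ≤ N * (h s * ‖x‖) := hdich τ (hsr.trans hrτ)
  have hnorm : ‖x‖ ≤ forwardSup U h s x :=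
    norm_le_forwardSup hmono hpos (hbound s · le_rfl) (by simp [hU.1 s hs])
  have ht : 0 < h t := hpos.trans_le (hmono self_mem_Ici hst hst)
  have hsup : forwardSup U h t (U t s x) ≤ N * (h s * ‖x‖) / h t := by
    refine forwardSup_le (hmono.mono (Ici_subset_Ici.2 hst)) ht.le fun τ hτ => ?_
    rw [← ContinuousLinearMap.comp_apply, ← hU.2 τ t s hs hst hτ]
    exact hbound t τ hst hτ
  calc h t * forwardSup U h t (U t s x) ≤ N * (h s * ‖x‖) := (le_div_iff₀' ht).1 hsup
    _ ≤ N * (h s * forwardSup U h s x) := by gcongr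

theorem backward_weight_le_one (hmono : MonotoneOn k (Icc 0 t)) (hpos : 0 ≤ k t)
    (τ : Icc (0 : ℝ) t) : k τ / k t ≤ 1 :=
  div_le_one_of_le₀ (hmono τ.2 (right_mem_Icc.2 (τ.2.1.trans τ.2.2)) τ.2.2) hpos

theorem backwardSup_le (hmono : MonotoneOn k (Icc 0 t)) (hpos : 0 ≤ k t) (ht : 0 ≤ t)
    (hM : ∀ τ, 0 ≤ τ → τ ≤ t → ‖V t τ x‖ ≤ M) : backwardSup V k t x ≤ M :=
  have : Nonempty (Icc (0 : ℝ) t) := ⟨⟨t, right_mem_Icc.2 ht⟩⟩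
  ciSup_mul_le_of_weight_le_one (backward_weight_le_one hmono hpos) (fun _ => norm_nonneg _)
    fun τ => hM τ τ.2.1 τ.2.2

theorem norm_le_backwardSup (hmono : MonotoneOn k (Icc 0 t)) (hpos : 0 < k t) (ht : 0 ≤ t)
    (hM : ∀ τ, 0 ≤ τ → τ ≤ t → ‖V t τ x‖ ≤ M) (hid : V t t x = x) :
    ‖x‖ ≤ backwardSup V k t x := by
  have hself : ‖V t t x‖ ≤ backwardSup V k t x :=
    le_ciSup_mul_of_weight_eq_one (i := (⟨t, right_mem_Icc.2 ht⟩ : Icc (0 : ℝ) t))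
      (backward_weight_le_one hmono hpos.le) (fun τ => norm_nonneg (V t τ x))
      (fun τ => hM τ τ.2.1 τ.2.2) (div_self hpos.ne')
  rwa [hid] at hself

theorem mul_backwardSup_le (hmono : MonotoneOn k (Icc 0 t)) (hpos : 0 < k s) (hN : 0 ≤ N)
    (hs : 0 ≤ s) (hst : s ≤ t) (hid : V t t x = x)
    (hcomp : ∀ τ, 0 ≤ τ → τ ≤ s → V t τ x = V s τ (V t s x))
    (hdich : ∀ τ, 0 ≤ τ → τ ≤ t → k t * ‖V t τ x‖ ≤ N * (k τ * ‖x‖)) :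
    k t * backwardSup V k s (V t s x) ≤ N * (k s * backwardSup V k t x) := by
  have ht : 0 ≤ t := hs.trans hst
  have hkt : 0 < k t := hpos.trans_le (hmono ⟨hs, hst⟩ (right_mem_Icc.2 ht) hst)
  have hbound : ∀ r τ, 0 ≤ τ → τ ≤ r → r ≤ t → ‖V t τ x‖ ≤ N * (k r * ‖x‖) / k t := by
    intro r τ hτ hτr hrt
    rw [le_div_iff₀' hkt]
    calc k t * ‖V t τ x‖ ≤ N * (k τ * ‖x‖) := hdich τ hτ (hτr.trans hrt)
      _ ≤ N * (k r * ‖x‖) := by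
          gcongr
          exact hmono ⟨hτ, hτr.trans hrt⟩ ⟨hτ.trans hτr, hrt⟩ hτr
  have hnorm : ‖x‖ ≤ backwardSup V k t x :=
    norm_le_backwardSup hmono hkt ht (fun τ hτ hτt => hbound t τ hτ hτt le_rfl) hid
  have hsup : backwardSup V k s (V t s x) ≤ N * (k s * ‖x‖) / k t := by
    refine backwardSup_le (hmono.mono (Icc_subset_Icc_right hst)) hpos.le hs fun τ hτ hτs => ?_
    rw [← hcomp τ hτ hτs]
    exact hbound s τ hτ hτs hst
  calc k t * backwardSup V k s (V t s x) ≤ N * (k s * ‖x‖) := (le_div_iff₀' hkt).1 hsup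
    _ ≤ N * (k s * backwardSup V k t x) := by gcongr

theorem ProjectorFamily.apply_apply (hP : ProjectorFamily P) (ht : 0 ≤ t) (x : E) :
    P t (P t x) = P t x :=
  DFunLike.congr_fun (hP t ht) x

theorem ProjectorFamily.apply_sub_apply (hP : ProjectorFamily P) (ht : 0 ≤ t) (x : E) :
    P t (x - P t x) = 0 := by
  rw [map_sub, hP.apply_apply ht, sub_self]

theorem InvariantFor.apply_map_apply (hI : InvariantFor U P) (hP : ProjectorFamily P)
    (hs : 0 ≤ s) (hst : s ≤ t) (x : E) : P t (U t s (P s x)) = U t s (P s x) := by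
  rw [← hI t s hs hst, hP.apply_apply hs]

theorem stmt11_general (hU : EvolutionOperator U) (hP : ProjectorFamily P) (hI : InvariantFor U P)
    (hh : MonotoneOn h (Ici 0)) (hh_pos : ∀ t, 0 ≤ t → 0 < h t)
    (hk : MonotoneOn k (Ici 0)) (hk_pos : ∀ t, 0 ≤ t → 0 < k t)
    (hUV : ∀ t s : ℝ, 0 ≤ s → s ≤ t → ∀ x : E, U t s (V t s (x - P t x)) = x - P t x)
    (hVV : ∀ t s t₀ : ℝ, 0 ≤ t₀ → t₀ ≤ s → s ≤ t → ∀ x : E,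
      V t t₀ (x - P t x) = V s t₀ (V t s (x - P t x)))
    (hVQ : ∀ t s : ℝ, 0 ≤ s → s ≤ t → ∀ x : E,
      V t s (x - P t x) = V t s (x - P t x) - P s (V t s (x - P t x)))
    {N : ℝ → ℝ} (hN : ∀ t, 0 ≤ t → 0 ≤ N t)
    (hdich : ∀ t s : ℝ, 0 ≤ s → s ≤ t → ∀ x : E,
      h t * ‖U t s (P s x)‖ ≤ N s * (h s * ‖P s x‖) ∧
      k t * ‖x - P s x‖ ≤ N t * (k s * ‖U t s (x - P s x)‖)) :
    ∀ t s : ℝ, 0 ≤ s → s ≤ t → ∀ x : E,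
      h t * lyapG U V P h k t (U t s (P s x)) ≤ N s * (h s * lyapG U V P h k s (P s x)) ∧
      k t * lyapG U V P h k s (V t s (x - P t x)) ≤
        N t * (k s * lyapG U V P h k t (x - P t x)) := by
  intro t s hs hst x
  have ht : 0 ≤ t := hs.trans hst
  constructor
  · rw [lyapG_of_apply_eq_self (hI.apply_map_apply hP hs hst x),
      lyapG_of_apply_eq_self (hP.apply_apply hs x)]
    exact mul_forwardSup_le hU (hh.mono (Ici_subset_Ici.2 hs)) (hh_pos s hs) (hN s hs) hs hst
      fun τ hτ => (hdich τ s hs hτ x).1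
  · have hker : ∀ τ, 0 ≤ τ → τ ≤ t → P τ (V t τ (x - P t x)) = 0 := fun τ hτ hτt =>
      sub_eq_self.1 (hVQ t τ hτ hτt x).symm
    have hback : ∀ τ, 0 ≤ τ → τ ≤ t →
        k t * ‖V t τ (x - P t x)‖ ≤ N t * (k τ * ‖x - P t x‖) := fun τ hτ hτt => by
      simpa only [hker τ hτ hτt, sub_zero, hUV t τ hτ hτt]
        using (hdich t τ hτ hτt (V t τ (x - P t x))).2
    have hid : V t t (x - P t x) = x - P t x := by
      simpa only [hU.1 t ht, ContinuousLinearMap.id_apply] using hUV t t ht le_rfl x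
    rw [lyapG_of_apply_eq_zero (hker s hs hst), lyapG_of_apply_eq_zero (hP.apply_sub_apply ht x)]
    exact mul_backwardSup_le (hk.mono Icc_subset_Ici_self) (hk_pos s hs) (hN t ht) hs hst hid
      (fun τ hτ hτs => hVV t s τ hτ hτs hst x) hback

end LyapunovNorm

theorem GrowthRate.pos {h : ℝ → ℝ} (hh : GrowthRate h) (t : ℝ) (ht : 0 ≤ t) : 0 < h t :=
  zero_lt_one.trans_le (hh.2.1 t ht)

/-- (from the proof of Theorem 3.10) : if `(U,P)` is `(h,k)`-dichotomic with
nondecreasing function `N`, then the family of norms `lyapG` satisfies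
`(hd₁''')` and `(kd₂''')` with the same `N`. -/
theorem stmt11 (U V : ℝ → ℝ → X →L[ℝ] X) (P : ℝ → X →L[ℝ] X) (h k : ℝ → ℝ)
    (hU : EvolutionOperator U) (hP : ProjectorFamily P) (hC : CompatibleWith U P)
    (hh : GrowthRate h) (hk : GrowthRate k)
    (hv1 : ∀ t s : ℝ, 0 ≤ s → s ≤ t → ∀ x : X, U t s (V t s (x - P t x)) = x - P t x)
    (hv2 : ∀ t s : ℝ, 0 ≤ s → s ≤ t → ∀ x : X, V t s (U t s (x - P s x)) = x - P s x)
    (hv3 : ∀ t s t₀ : ℝ, 0 ≤ t₀ → t₀ ≤ s → s ≤ t → ∀ x : X,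
      V t t₀ (x - P t x) = V s t₀ (V t s (x - P t x)))
    (hv4 : ∀ t s : ℝ, 0 ≤ s → s ≤ t → ∀ x : X,
      V t s (x - P t x) = V t s (x - P t x) - P s (V t s (x - P t x)))
    (N : ℝ → ℝ) (hN : Nondecr1 N)
    (hdich : ∀ t s : ℝ, 0 ≤ s → s ≤ t → ∀ x : X,
      h t * ‖U t s (P s x)‖ ≤ N s * (h s * ‖P s x‖) ∧
      k t * ‖x - P s x‖ ≤ N t * (k s * ‖U t s (x - P s x)‖)) :
    ∀ t s : ℝ, 0 ≤ s → s ≤ t → ∀ x : X,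
      h t * lyapG U V P h k t (U t s (P s x)) ≤ N s * (h s * lyapG U V P h k s (P s x)) ∧
      k t * lyapG U V P h k s (V t s (x - P t x)) ≤
        N t * (k s * lyapG U V P h k t (x - P t x)) :=
  stmt11_general hU hP hC.1 hh.1 hh.pos hk.1 hk.pos hv1 hv3 hv4
    (fun t ht => zero_le_one.trans (hN.2 t ht)) hdich
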